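/- For every finite linear combination a = Σ_h a_h E_{h+1,h} (a finitely supported family of complex coefficients a_h, h ∈ ℤ_{≥0}) and every finite linear combination b = Σ_k b_k E_{k,k+1}, the bracket [Z_{1,0} + a, Z_{0,1} + b] in L_L is nonzero. -/

import Mathlib

/- The ladder insertion-elimination Lie algebra `L_L` of Mencattini–Kreimer,
realized as the complex vector space of finitely supported functions `ℕ × ℕ → ℂ`,
with basis elements `Z n m = single (n, m) 1` and the bilinear bracket determined
on basis elements by formula (e1). -/

noncomputable section

/-- The underlying vector space of the ladder insertion-elimination Lie algebra. -/
abbrev LL : Type := (ℕ × ℕ) →₀ ℂ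

/-- The basis element `Z_{n,m}`. -/
def Z (n m : ℕ) : LL := Finsupp.single (n, m) 1

/-- `Θ(k) = 1` if `k ≥ 0`, and `0` otherwise. -/
def theta (k : ℤ) : ℂ := if 0 ≤ k then 1 else 0

/-- The Kronecker delta `δ_{n,m}`. -/
def kdelta (n m : ℕ) : ℂ := if n = m then 1 else 0

/-- Formula (e1) for the bracket `[Z_{n,m}, Z_{l,s}]` on basis elements, where
`p = (n, m)` and `q = (l, s)`.  (The natural subtractions occurring in the indices
are truncated, but every such term is multiplied by a `theta` coefficient which
vanishes whenever truncation would occur.) -/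
def zb (p q : ℕ × ℕ) : LL :=
  theta ((q.1 : ℤ) - p.2) • Z (q.1 - p.2 + p.1) q.2
    - theta ((q.2 : ℤ) - p.1) • Z q.1 (q.2 - p.1 + p.2)
    - theta ((p.1 : ℤ) - q.2) • Z (p.1 - q.2 + q.1) p.2
    + theta ((p.2 : ℤ) - q.1) • Z p.1 (p.2 - q.1 + q.2)
    - kdelta p.2 q.1 • Z p.1 q.2 + kdelta p.1 q.2 • Z q.1 p.2

/-- The bilinear extension of formula (e1) to all of `L_L`. -/
def br (x y : LL) : LL :=
  x.sum fun p a => y.sum fun q b => (a * b) • zb p q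

end

/-- The element `E_{i,j} = Z_{i,j} − Z_{i+1,j+1}` of `L_L`. -/
noncomputable def E (i j : ℕ) : LL := Z i j - Z (i + 1) (j + 1)

/-!
Whenever elements `x`, `y` of an associative algebra satisfy `y * x = 1`, the monomials
`x ^ n * y ^ m` multiply as in the bicyclic monoid, and formula (e1) is exactly the commutator of
two such monomials; so `Z n m ↦ x ^ n * y ^ m` represents `L_L`. Take for `x` and `y` the
right and left shift of complex sequences: `E i j` becomes a matrix unit, and `Z 1 0 + a`,
`Z 0 1 + b` become weighted shifts with weights `1 + a` and `1 + b`. The commutator of two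
opposite weighted shifts is diagonal, with entries the differences of consecutive products of
weights, so the two commute only if all these products vanish. Here they equal `1` far out.
-/

section Monoid

variable {M : Type*} [Monoid M] {x y : M}

lemma pow_mul_pow_of_mul_eq_one_of_le (hyx : y * x = 1) {m l : ℕ} (hml : m ≤ l) :
    y ^ m * x ^ l = x ^ (l - m) := by
  obtain ⟨d, rfl⟩ := Nat.exists_eq_add_of_le hml
  rw [pow_add, ← mul_assoc, pow_mul_pow_eq_one m hyx, one_mul, Nat.add_sub_cancel_left]

lemma pow_mul_pow_of_mul_eq_one_of_ge (hyx : y * x = 1) {m l : ℕ} (hlm : l ≤ m) :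
    y ^ m * x ^ l = y ^ (m - l) := by
  obtain ⟨d, rfl⟩ := Nat.exists_eq_add_of_le' hlm
  rw [pow_add, mul_assoc, pow_mul_pow_eq_one l hyx, mul_one, Nat.add_sub_cancel]

end Monoid

lemma kdelta_comm (n m : ℕ) : kdelta n m = kdelta m n := by
  simp only [kdelta, eq_comm]

section ComplexAlgebra

variable {A : Type*} [Ring A] [Algebra ℂ A]

lemma pow_mul_pow_eq_theta_smul {x y : A} (hyx : y * x = 1) (m l : ℕ) :
    y ^ m * x ^ l = theta ((l : ℤ) - m) • x ^ (l - m) + theta ((m : ℤ) - l) • y ^ (m - l)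
      - kdelta m l • (1 : A) := by
  simp only [theta, kdelta, sub_nonneg, Nat.cast_le]
  rcases lt_trichotomy m l with hml | rfl | hlm
  · simp [pow_mul_pow_of_mul_eq_one_of_le hyx hml.le, hml.le, hml.not_ge, hml.ne]
  · simp [pow_mul_pow_eq_one m hyx]
  · simp [pow_mul_pow_of_mul_eq_one_of_ge hyx hlm.le, hlm.le, hlm.not_ge, hlm.ne']

lemma monomial_mul_monomial_eq_theta_smul {x y : A} (hyx : y * x = 1) (n m l s : ℕ) :
    (x ^ n * y ^ m) * (x ^ l * y ^ s) =
      theta ((l : ℤ) - m) • (x ^ (l - m + n) * y ^ s)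
        + theta ((m : ℤ) - l) • (x ^ n * y ^ (m - l + s)) - kdelta m l • (x ^ n * y ^ s) := by
  calc (x ^ n * y ^ m) * (x ^ l * y ^ s)
      = x ^ n * (y ^ m * x ^ l) * y ^ s := by simp only [mul_assoc]
    _ = _ := by
      rw [pow_mul_pow_eq_theta_smul hyx, Nat.add_comm (l - m)]
      simp only [mul_add, mul_sub, add_mul, sub_mul, mul_smul_comm, smul_mul_assoc, mul_one,
        pow_add, mul_assoc]

/-- The linear map `L_L → A` with `Z n m ↦ x ^ n * y ^ m`. For `y * x = 1` it turns the bracket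
`br` into the commutator. -/
noncomputable def monomialMap (x y : A) : LL →ₗ[ℂ] A :=
  Finsupp.linearCombination ℂ fun p => x ^ p.1 * y ^ p.2

@[simp]
lemma monomialMap_Z (x y : A) (n m : ℕ) : monomialMap x y (Z n m) = x ^ n * y ^ m := by
  simp [monomialMap, Z]

lemma monomialMap_E (x y : A) (i j : ℕ) :
    monomialMap x y (E i j) = x ^ i * (1 - x * y) * y ^ j := by
  simp only [E, map_sub, monomialMap_Z, pow_succ x, pow_succ' y]
  noncomm_ring

lemma monomialMap_zb {x y : A} (hyx : y * x = 1) (p q : ℕ × ℕ) :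
    monomialMap x y (zb p q) = ⁅x ^ p.1 * y ^ p.2, x ^ q.1 * y ^ q.2⁆ := by
  rw [Ring.lie_def, monomial_mul_monomial_eq_theta_smul hyx,
    monomial_mul_monomial_eq_theta_smul hyx, kdelta_comm q.2]
  simp only [zb, map_add, map_sub, map_smul, monomialMap_Z]
  abel

attribute [local instance] LieRing.ofAssociativeRing

lemma monomialMap_br {x y : A} (hyx : y * x = 1) (u v : LL) :
    monomialMap x y (br u v) = ⁅monomialMap x y u, monomialMap x y v⁆ := by
  have expand (w : LL) : monomialMap x y w = ∑ p ∈ w.support, w p • (x ^ p.1 * y ^ p.2) := rfl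
  rw [expand u, expand v, sum_lie_sum]
  simp only [br, Finsupp.sum, map_sum, map_smul, monomialMap_zb hyx, smul_lie, lie_smul, smul_smul,
    mul_comm (v _)]

end ComplexAlgebra

section WeightedShift

variable {R : Type*}

/-- The weighted right shift of sequences, `(f₀, f₁, …) ↦ (0, α₀ f₀, α₁ f₁, …)`: the form in which
`Z 1 0` and the `E (h + 1) h` act on sequences. -/
def rightShift [CommSemiring R] (α : ℕ → R) : Module.End R (ℕ → R) where
  toFun f
    | 0 => 0
    | n + 1 => α n * f n
  map_add' f g := by ext (_ | n) <;> simp [mul_add]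
  map_smul' c f := by ext (_ | n) <;> simp [mul_left_comm]

/-- The weighted left shift of sequences, `(f₀, f₁, …) ↦ (β₀ f₁, β₁ f₂, …)`: the form in which
`Z 0 1` and the `E k (k + 1)` act. As for `rightShift`, the weight between positions `n` and `n + 1`
is indexed by `n`. -/
def leftShift [CommSemiring R] (β : ℕ → R) : Module.End R (ℕ → R) where
  toFun f n := β n * f (n + 1)
  map_add' f g := by ext n; simp [mul_add]
  map_smul' c f := by ext n; simp [mul_left_comm]

section CommSemiring

variable [CommSemiring R]

@[simp]
lemma rightShift_apply_zero (α f : ℕ → R) : rightShift α f 0 = 0 := rfl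

@[simp]
lemma rightShift_apply_succ (α f : ℕ → R) (n : ℕ) : rightShift α f (n + 1) = α n * f n := rfl

@[simp]
lemma leftShift_apply (β f : ℕ → R) (n : ℕ) : leftShift β f n = β n * f (n + 1) := rfl

lemma leftShift_one_mul_rightShift_one : leftShift (1 : ℕ → R) * rightShift 1 = 1 := by
  ext1 f; ext n; simp

lemma leftShift_one_pow_apply (j : ℕ) (f : ℕ → R) (n : ℕ) :
    (leftShift 1 ^ j) f n = f (n + j) := by
  induction j generalizing n with
  | zero => simp
  | succ j ih => simp [pow_succ', ih, Nat.add_right_comm, Nat.add_assoc]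

lemma rightShift_one_pow_single_zero (i : ℕ) (c : R) :
    (rightShift 1 ^ i) (Pi.single 0 c) = Pi.single i c := by
  induction i with
  | zero => simp
  | succ i ih => ext (_ | n) <;> simp [pow_succ', ih, Pi.single_apply]

theorem commute_rightShift_leftShift_iff (α β : ℕ → R) :
    Commute (rightShift α) (leftShift β) ↔ α * β = 0 := by
  constructor
  · intro hcomm
    have hentry (n : ℕ) := congrFun (LinearMap.congr_fun hcomm.eq 1) n
    have hzero : 0 = β 0 * α 0 := by simpa using hentry 0
    have hsucc (n : ℕ) : α n * β n = β (n + 1) * α (n + 1) := by simpa using hentry (n + 1)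
    ext n
    rw [Pi.mul_apply, Pi.zero_apply]
    induction n with
    | zero => rw [mul_comm, ← hzero]
    | succ n ih => rw [mul_comm, ← hsucc, ih]
  · intro hαβ
    have hprod (n : ℕ) : α n * β n = 0 := congrFun hαβ n
    have hRL : rightShift α * leftShift β = 0 := by
      ext1 f; ext (_ | n) <;> simp [← mul_assoc, hprod]
    have hLR : leftShift β * rightShift α = 0 := by
      ext1 f; ext n; simp [← mul_assoc, mul_comm (β n) (α n), hprod]
    exact hRL.trans hLR.symm

end CommSemiring

lemma one_sub_rightShift_mul_leftShift_apply [CommRing R] (f : ℕ → R) :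
    (1 - rightShift 1 * leftShift 1 : Module.End R (ℕ → R)) f = Pi.single 0 (f 0) := by
  ext (_ | n) <;> simp

end WeightedShift

section ShiftRepresentation

/-- The representation of `L_L` on complex sequences in which `Z n m` is the `n`-th power of the
right shift times the `m`-th power of the left shift. -/
noncomputable def shiftRep : LL →ₗ[ℂ] Module.End ℂ (ℕ → ℂ) :=
  monomialMap (rightShift 1) (leftShift 1)

lemma shiftRep_br (u v : LL) : shiftRep (br u v) = ⁅shiftRep u, shiftRep v⁆ :=
  monomialMap_br leftShift_one_mul_rightShift_one u v

lemma shiftRep_E_apply (i j : ℕ) (f : ℕ → ℂ) : shiftRep (E i j) f = Pi.single i (f j) := by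
  rw [shiftRep, monomialMap_E, Module.End.mul_apply, Module.End.mul_apply,
    one_sub_rightShift_mul_leftShift_apply, leftShift_one_pow_apply, zero_add,
    rightShift_one_pow_single_zero]

lemma shiftRep_Z_one_zero_add_sum (a : ℕ →₀ ℂ) :
    shiftRep (Z 1 0 + a.sum fun h c => c • E (h + 1) h) = rightShift (1 + ⇑a) := by
  have hZ : shiftRep (Z 1 0) = rightShift 1 := by simp [shiftRep]
  ext1 f
  ext (_ | n) <;>
    simp +contextual [hZ, Finsupp.sum, shiftRep_E_apply, Pi.single_apply, add_mul]

lemma shiftRep_Z_zero_one_add_sum (b : ℕ →₀ ℂ) :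
    shiftRep (Z 0 1 + b.sum fun k c => c • E k (k + 1)) = leftShift (1 + ⇑b) := by
  have hZ : shiftRep (Z 0 1) = leftShift 1 := by simp [shiftRep]
  ext1 f
  ext n
  simp +contextual [hZ, Finsupp.sum, shiftRep_E_apply, Pi.single_apply, add_mul]

end ShiftRepresentation

/-- For any finite linear combinations `a = Σ_h a_h E_{h+1,h}`
and `b = Σ_k b_k E_{k,k+1}`, the bracket `[Z_{1,0} + a, Z_{0,1} + b]` is nonzero. -/
theorem bracket_Z10_Z01_corrected_ne_zero (a b : ℕ →₀ ℂ) :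
    br (Z 1 0 + a.sum fun h c => c • E (h + 1) h)
       (Z 0 1 + b.sum fun k c => c • E k (k + 1)) ≠ 0 := by
  intro hbr
  have hcomm : Commute (rightShift (1 + ⇑a)) (leftShift (1 + ⇑b)) := by
    rw [commute_iff_lie_eq, ← shiftRep_Z_one_zero_add_sum, ← shiftRep_Z_zero_one_add_sum,
      ← shiftRep_br, hbr, map_zero]
  have hprod : (1 + ⇑a) * (1 + ⇑b) = 0 := (commute_rightShift_leftShift_iff _ _).mp hcomm
  obtain ⟨N, hN⟩ := Infinite.exists_notMem_finset (a.support ∪ b.support)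
  obtain ⟨haN, hbN⟩ : a N = 0 ∧ b N = 0 := by simpa using hN
  simpa [haN, hbN] using congrFun hprod N
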